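/- arXiv:0711.2164 — 6 statements merged into one kernel-verified Lean document; each statement's English description precedes it below -/
import Mathlib

section
/- (Potter bounds) Let φ : [1,∞) → (0,∞) be a function of the class 𝓜. Then for every ε > 0 there exists a constant C ≥ 1 such that for all t ≥ 1 and all λ ≥ 1 one has C⁻¹ λ^{-ε} ≤ φ(λt)/φ(t) ≤ C λ^{ε}. -/
open MeasureTheory Filter Topology

/-- The class `𝓜` of Borel measurable functions `φ : [1,∞) → (0,∞)` such that `φ` and `1/φ`
are bounded on every interval `[1,b]`, `1 < b < ∞`, and `φ` is slowly varying at `+∞`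
in Karamata's sense. (We model `φ` as a function on all of `ℝ`; only its values on
`[1,∞)` matter.) -/
def SlowlyVaryingM (φ : ℝ → ℝ) : Prop :=
  Measurable φ ∧
  (∀ t : ℝ, 1 ≤ t → 0 < φ t) ∧
  (∀ b : ℝ, 1 < b → ∃ C : ℝ, 0 < C ∧ ∀ t ∈ Set.Icc (1:ℝ) b, φ t ≤ C ∧ 1 / φ t ≤ C) ∧
  (∀ lam : ℝ, 0 < lam → Tendsto (fun t : ℝ => φ (lam * t) / φ t) atTop (𝓝 1))



lemma aux_measure (h : ℝ → ℝ) (hm : Measurable h)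
    (hs : ∀ u : ℝ, Tendsto (fun x => h (x + u) - h x) atTop (𝓝 0))
    (x : ℕ → ℝ) (hx : Tendsto x atTop atTop) (b : ℝ) :
    ∀ᶠ n in atTop, volume ({y | 1 ≤ |h (x n + y) - h (x n)|} ∩ Set.Icc 0 b)
      < ENNReal.ofReal (1/2) := by
  have h1 : TendstoInMeasure (volume.restrict (Set.Icc (0:ℝ) b))
      (fun n y => h (x n + y) - h (x n)) atTop (fun _ => (0:ℝ)) := by
    apply tendstoInMeasure_of_tendsto_ae
    · intro n
      exact ((hm.comp (measurable_const.add measurable_id)).sub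
        measurable_const).aestronglyMeasurable
    · exact Eventually.of_forall fun y => (hs y).comp hx
  rw [tendstoInMeasure_iff_norm] at h1
  have h2 := (h1 1 one_pos).eventually_lt_const
    (show (0:ENNReal) < ENNReal.ofReal (1/2) by simp)
  filter_upwards [h2] with n hn
  rw [Measure.restrict_apply] at hn
  · simpa using hn
  · have : Measurable fun y => ‖h (x n + y) - h (x n) - 0‖ :=
      (((hm.comp (measurable_const.add measurable_id)).sub
        measurable_const).sub measurable_const).norm
    exact measurableSet_le measurable_const this

lemma aux_unif (h : ℝ → ℝ) (hm : Measurable h)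
    (hs : ∀ u : ℝ, Tendsto (fun x => h (x + u) - h x) atTop (𝓝 0)) :
    ∃ X : ℝ, ∀ x, X ≤ x → ∀ u, 0 ≤ u → u ≤ 1 → |h (x + u) - h x| ≤ 2 := by
  by_contra! hc
  choose x hx u hu0 hu1 hbad using fun n : ℕ => hc (n : ℝ)
  have hxt : Tendsto x atTop atTop := tendsto_atTop_mono hx tendsto_natCast_atTop_atTop
  have hxt' : Tendsto (fun n => x n + u n) atTop atTop :=
    tendsto_atTop_mono (fun n => by linarith [hu0 n]) hxt
  obtain ⟨n, h1, h2⟩ :=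
    ((aux_measure h hm hs x hxt 2).and (aux_measure h hm hs _ hxt' 1)).exists
  set A := {y | 1 ≤ |h (x n + y) - h (x n)|} ∩ Set.Icc 0 2
  set B := {y | 1 ≤ |h (x n + u n + y) - h (x n + u n)|} ∩ Set.Icc 0 1
  have hsub : Set.Icc (0:ℝ) 1 ⊆ (fun z => u n + z) ⁻¹' A ∪ B := by
    intro z hz
    by_contra hcon
    rw [Set.mem_union, not_or] at hcon
    obtain ⟨hA, hB⟩ := hcon
    have hA' : |h (x n + (u n + z)) - h (x n)| < 1 := by
      by_contra! hh
      exact hA ⟨hh, by linarith [hu0 n, hz.1], by linarith [hu1 n, hz.2]⟩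
    have hB' : |h (x n + u n + z) - h (x n + u n)| < 1 := by
      by_contra! hh
      exact hB ⟨hh, hz⟩
    have hb := hbad n
    rw [← add_assoc] at hA'
    rw [abs_lt] at hA' hB'
    rcases lt_abs.1 hb with hb | hb <;> linarith [hA'.1, hA'.2, hB'.1, hB'.2]
  have h3 := (measure_mono hsub).trans (measure_union_le (μ := volume) _ _)
  rw [measure_preimage_add, Real.volume_Icc] at h3
  have h4 := h3.trans_lt (ENNReal.add_lt_add h1 h2)
  rw [← ENNReal.ofReal_add (by norm_num) (by norm_num)] at h4
  norm_num at h4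

lemma aux_nat (h : ℝ → ℝ) (X ε : ℝ) (h1 : ∀ x, X ≤ x → |h (x + 1) - h x| ≤ ε) (n : ℕ) :
    ∀ x, X ≤ x → |h (x + n) - h x| ≤ ε * n := by
  induction n with
  | zero => intro x _; simp
  | succ k ih =>
    intro x hx
    have a := ih x hx
    have b := h1 (x + k) (by have : (0:ℝ) ≤ k := k.cast_nonneg
                             linarith)
    push_cast
    rw [← add_assoc]
    rw [abs_le] at *
    constructor <;> linarith [a.1, a.2, b.1, b.2]

lemma aux_add (h : ℝ → ℝ) (hm : Measurable h)
    (hs : ∀ u : ℝ, Tendsto (fun x => h (x + u) - h x) atTop (𝓝 0))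
    (hb : ∀ b : ℝ, ∃ K : ℝ, ∀ x, 0 ≤ x → x ≤ b → |h x| ≤ K) (ε : ℝ) (hε : 0 < ε) :
    ∃ M : ℝ, 0 ≤ M ∧ ∀ x, 0 ≤ x → ∀ s, 0 ≤ s → |h (x + s) - h x| ≤ M + ε * s := by
  obtain ⟨X0, hX0⟩ := aux_unif h hm hs
  have h1 := (hs 1).eventually (Metric.ball_mem_nhds 0 hε)
  obtain ⟨X1, hX1⟩ := eventually_atTop.1 h1
  set X := max 0 (max X0 X1)
  have hXn : 0 ≤ X := le_max_left _ _
  have hXa : X0 ≤ X := (le_max_left _ _).trans (le_max_right _ _)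
  have hXb : X1 ≤ X := (le_max_right _ _).trans (le_max_right _ _)
  obtain ⟨K, hK⟩ := hb X
  have hK0 : 0 ≤ K := (abs_nonneg _).trans (hK 0 le_rfl hXn)
  have hN := aux_nat h X ε (fun x hx => by
    have := hX1 x (hXb.trans hx)
    simp only [Metric.mem_ball, dist_zero_right, Real.norm_eq_abs] at this
    exact this.le)
  have big : ∀ x, X ≤ x → ∀ s, 0 ≤ s → |h (x + s) - h x| ≤ 2 + ε * s := by
    intro x hx s hs0
    have f1 := Nat.floor_le hs0
    have f2 := Nat.lt_floor_add_one s
    have f3 : (0:ℝ) ≤ (⌊s⌋₊ : ℝ) := Nat.cast_nonneg _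
    have a := hN ⌊s⌋₊ x hx
    have b := hX0 (x + ⌊s⌋₊) (by linarith) (s - ⌊s⌋₊) (by linarith) (by linarith)
    rw [show x + (⌊s⌋₊:ℝ) + (s - ⌊s⌋₊) = x + s by ring] at b
    have c := mul_le_mul_of_nonneg_left f1 hε.le
    rw [abs_le] at *
    constructor <;> linarith [a.1, a.2, b.1, b.2]
  refine ⟨2 * K + 2, by linarith, fun x hx s hs0 => ?_⟩
  have es : 0 ≤ ε * s := by positivity
  rcases le_total X x with hxX | hxX
  · linarith [big x hxX s hs0]
  · have a := abs_le.1 (hK x hx hxX)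
    rcases le_total X (x + s) with hh | hh
    · have b := big X le_rfl (x + s - X) (by linarith)
      rw [show X + (x + s - X) = x + s by ring] at b
      have b' := abs_le.1 b
      have c := abs_le.1 (hK X hXn le_rfl)
      have d : ε * (x + s - X) ≤ ε * s := mul_le_mul_of_nonneg_left (by linarith) hε.le
      rw [abs_le]
      constructor <;> linarith [a.1, a.2, b'.1, b'.2, c.1, c.2]
    · have c := abs_le.1 (hK (x + s) (by linarith) hh)
      rw [abs_le]
      constructor <;> linarith [a.1, a.2, c.1, c.2]

/-- Potter bounds for a slowly varying function of class `𝓜`. -/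
theorem slowly_varying_potter_bounds
    (φ : ℝ → ℝ) (hφ : SlowlyVaryingM φ) (ε : ℝ) (hε : 0 < ε) :
    ∃ C : ℝ, 1 ≤ C ∧ ∀ t : ℝ, 1 ≤ t → ∀ lam : ℝ, 1 ≤ lam →
      C⁻¹ * lam ^ (-ε) ≤ φ (lam * t) / φ t ∧ φ (lam * t) / φ t ≤ C * lam ^ ε := by
  obtain ⟨hm, hpos, hbd, hsv⟩ := hφ
  obtain ⟨M, hM0, hM⟩ := aux_add (fun x => Real.log (φ (Real.exp x)))
    (Real.measurable_log.comp (hm.comp Real.measurable_exp))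
    (by
      intro u
      have h1 := ((hsv (Real.exp u) (Real.exp_pos u)).comp Real.tendsto_exp_atTop).log one_ne_zero
      rw [Real.log_one] at h1
      refine h1.congr' ?_
      filter_upwards [eventually_ge_atTop 0, eventually_ge_atTop (-u)] with x hx hxu
      have p1 := hpos (Real.exp x) (Real.one_le_exp hx)
      have p2 := hpos (Real.exp (x + u)) (Real.one_le_exp (by linarith))
      simp only [Function.comp]
      rw [← Real.exp_add, add_comm u x, Real.log_div p2.ne' p1.ne'])
    (by
      intro b
      obtain ⟨C, hC, hCb⟩ := hbd (Real.exp b + 1) (by linarith [Real.exp_pos b])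
      refine ⟨Real.log C, fun x hx hxb => ?_⟩
      have e1 := Real.one_le_exp hx
      have p := hpos _ e1
      obtain ⟨c1, c2⟩ := hCb (Real.exp x) ⟨e1, by linarith [Real.exp_le_exp.2 hxb]⟩
      have l1 := Real.log_le_log p c1
      have l2 := Real.log_le_log (by positivity) c2
      rw [one_div, Real.log_inv] at l2
      exact abs_le.2 ⟨by linarith, l1⟩) ε hε
  refine ⟨Real.exp M, Real.one_le_exp hM0, fun t ht lam hl => ?_⟩
  have t0 : 0 < t := by linarith
  have l0 : 0 < lam := by linarith
  have key := hM (Real.log t) (Real.log_nonneg ht) (Real.log lam) (Real.log_nonneg hl)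
  have p1 := hpos t ht
  have p2 := hpos (lam * t) (by nlinarith)
  simp only [Real.exp_add, Real.exp_log t0, Real.exp_log l0] at key
  rw [mul_comm t lam, ← Real.log_div p2.ne' p1.ne'] at key
  obtain ⟨k1, k2⟩ := abs_le.1 key
  have q : 0 < φ (lam * t) / φ t := div_pos p2 p1
  rw [Real.rpow_def_of_pos l0, Real.rpow_def_of_pos l0, ← Real.exp_neg, ← Real.exp_add,
    ← Real.exp_add]
  exact ⟨(Real.le_log_iff_exp_le q).1 (by linarith), (Real.log_le_iff_le_exp q).1 (by linarith)⟩
end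

section
/- (Uniform convergence theorem) Let φ : [1,∞) → (0,∞) be a function of the class 𝓜. Then for any fixed 0 < a ≤ b < ∞ with a ≥ 1 (or after restricting so that λt ≥ 1), the convergence φ(λt)/φ(t) → 1 as t → +∞ is uniform in λ on the interval [a,b]; that is, sup_{λ ∈ [a,b]} |φ(λt)/φ(t) − 1| → 0 as t → +∞. -/
open MeasureTheory Filter Topology

theorem sv_aux_meas (h : ℝ → ℝ) (hm : Measurable h)
    (hl : ∀ u : ℝ, Tendsto (fun x => h (x + u) - h x) atTop (𝓝 0)) (L e : ℝ) (he : 0 < e) :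
    Tendsto (fun x => volume ({v : ℝ | e ≤ |h (x + v) - h x|} ∩ Set.Icc 0 L)) atTop (𝓝 0) := by
  apply tendsto_of_seq_tendsto
  intro x hx
  have key : TendstoInMeasure (volume.restrict (Set.Icc (0:ℝ) L))
      (fun (n : ℕ) v => h (x n + v) - h (x n)) atTop (fun _ => (0:ℝ)) := by
    apply tendstoInMeasure_of_tendsto_ae
    · intro n
      exact ((hm.comp (measurable_const.add measurable_id)).sub
        measurable_const).aestronglyMeasurable
    · exact Eventually.of_forall fun v => (hl v).comp hx
  have := tendstoInMeasure_iff_dist.1 key e he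
  refine this.congr fun n => ?_
  rw [Measure.restrict_apply' measurableSet_Icc]
  simp [Real.dist_eq]

theorem sv_aux_unif (h : ℝ → ℝ) (hm : Measurable h)
    (hl : ∀ u : ℝ, Tendsto (fun x => h (x + u) - h x) atTop (𝓝 0)) (B e : ℝ) (he : 0 < e) :
    ∀ᶠ x in atTop, ∀ u ∈ Set.Icc (0:ℝ) B, |h (x + u) - h x| < e := by
  have h1 := sv_aux_meas h hm hl (B + 1) (e / 2) (by positivity)
  have h2 : ∀ᶠ x in atTop, volume ({v : ℝ | e / 2 ≤ |h (x + v) - h x|} ∩ Set.Icc 0 (B + 1))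
      < ENNReal.ofReal (1 / 2) := h1.eventually_lt_const (by simp)
  obtain ⟨X, hX⟩ := eventually_atTop.1 h2
  filter_upwards [eventually_ge_atTop X] with x hx u hu
  by_contra! hcon
  have m1 := hX x hx
  have m2 := hX (x + u) (by linarith [hu.1])
  set V := {v : ℝ | e / 2 ≤ |h (x + v) - h x|} ∩ Set.Icc 0 (B + 1)
  set W := {v : ℝ | e / 2 ≤ |h (x + u + v) - h (x + u)|} ∩ Set.Icc 0 (B + 1)
  have hsub : Set.Icc u (B + 1) ⊆ V ∪ (fun w => w + (-u)) ⁻¹' W := by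
    intro w hw
    by_contra hn
    rw [Set.mem_union, not_or] at hn
    obtain ⟨n1, n2⟩ := hn
    have a1 : |h (x + w) - h x| < e / 2 := by
      by_contra! c
      exact n1 ⟨c, by linarith [hu.1, hw.1], hw.2⟩
    have a2 : |h (x + w) - h (x + u)| < e / 2 := by
      by_contra! c
      refine n2 ⟨?_, ?_, ?_⟩
      · show e / 2 ≤ |h (x + u + (w + -u)) - h (x + u)|
        rwa [show x + u + (w + -u) = x + w by ring]
      · show 0 ≤ w + -u
        linarith [hw.1]
      · show w + -u ≤ B + 1
        linarith [hw.2, hu.1]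
    have := abs_sub_le (h (x + u)) (h (x + w)) (h x)
    rw [abs_sub_comm (h (x + u)) (h (x + w))] at this
    linarith
  have hle := (measure_mono hsub).trans (measure_union_le (μ := volume) _ _)
  rw [measure_preimage_add_right, Real.volume_Icc] at hle
  have hlt := hle.trans_lt (ENNReal.add_lt_add m1 m2)
  rw [← ENNReal.ofReal_add (by norm_num) (by norm_num)] at hlt
  have := (ENNReal.ofReal_lt_ofReal_iff (by norm_num)).1 hlt
  linarith [hu.2]

/-- Uniform convergence theorem for slowly varying functions of class `𝓜`:
`φ(λt)/φ(t) → 1` as `t → +∞` uniformly in `λ` on compact intervals `[a,b] ⊆ [1,∞)`. -/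
theorem slowly_varying_uniform_convergence
    (φ : ℝ → ℝ) (hφ : SlowlyVaryingM φ) (a b : ℝ) (ha : 1 ≤ a) (hab : a ≤ b) :
    TendstoUniformlyOn (fun (t : ℝ) (lam : ℝ) => φ (lam * t) / φ t)
      (fun _ => (1 : ℝ)) atTop (Set.Icc a b) := by
  obtain ⟨hm, hpos, -, hsv⟩ := hφ
  let h : ℝ → ℝ := fun x => Real.log (φ (Real.exp x))
  have hhm : Measurable h := Real.measurable_log.comp (hm.comp Real.measurable_exp)
  have hl : ∀ u : ℝ, Tendsto (fun x => h (x + u) - h x) atTop (𝓝 0) := by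
    intro u
    have t1 := ((hsv (Real.exp u) (Real.exp_pos u)).comp Real.tendsto_exp_atTop).log one_ne_zero
    rw [Real.log_one] at t1
    refine t1.congr' ?_
    filter_upwards [eventually_ge_atTop 0, eventually_ge_atTop (-u)] with x hx hxu
    have p1 : 0 < φ (Real.exp x) := hpos _ (Real.one_le_exp hx)
    have p2 : 0 < φ (Real.exp (x + u)) := hpos _ (Real.one_le_exp (by linarith))
    simp only [Function.comp, h]
    rw [← Real.exp_add, add_comm u x, Real.log_div p2.ne' p1.ne']
  rw [Metric.tendstoUniformlyOn_iff]
  intro ε hε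
  obtain ⟨δ, hδ, hexp⟩ := Metric.continuousAt_iff.1 (Real.continuous_exp.continuousAt (x := 0)) ε hε
  have hu := Real.tendsto_log_atTop.eventually (sv_aux_unif h hhm hl (Real.log b) δ hδ)
  filter_upwards [hu, eventually_ge_atTop 1] with t ht ht1 lam hlam
  have hlam1 : 1 ≤ lam := ha.trans hlam.1
  have h1 := ht (Real.log lam) ⟨Real.log_nonneg hlam1, Real.log_le_log (by linarith) hlam.2⟩
  have p1 : 0 < φ t := hpos _ ht1
  have p2 : 0 < φ (lam * t) := hpos _ (one_le_mul_of_one_le_of_one_le hlam1 ht1)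
  have h2 := @hexp (h (Real.log t + Real.log lam) - h (Real.log t)) (by
    rw [Real.dist_eq, sub_zero]; exact h1)
  have e1 : Real.exp (Real.log t + Real.log lam) = lam * t := by
    rw [Real.exp_add, Real.exp_log (by linarith), Real.exp_log (by linarith), mul_comm]
  simp only [h] at h2
  rw [e1, Real.exp_log (by linarith : 0 < t), Real.exp_sub, Real.exp_log p1, Real.exp_log p2,
    Real.exp_zero, dist_comm] at h2
  exact h2
end

section
/- (Karamata representation) Let φ : [1,∞) → (0,∞) be a function of the class 𝓜. Then there exist a real number c and Borel measurable functions η : [1,∞) → ℝ and ε : [1,∞) → ℝ with η(t) → c and ε(t) → 0 as t → +∞, such that φ(t) = exp( η(t) + ∫₁^t ε(u)/u du ) for all t ≥ 1. -/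
open MeasureTheory Filter Topology

theorem karamata_uct (h : ℝ → ℝ) (hm : Measurable h)
    (hl : ∀ u : ℝ, Tendsto (fun x => h (x + u) - h x) atTop (𝓝 0)) (ε : ℝ) (hε : 0 < ε) :
    ∃ X : ℝ, ∀ x ≥ X, ∀ u ∈ Set.Icc (0:ℝ) 1, |h (x + u) - h x| ≤ 2 * ε := by
  let A : ℝ → Set ℝ := fun x => {v | ε ≤ |h (x + v) - h x|} ∩ Set.Icc 0 2
  have hA : ∀ x, MeasurableSet (A x) := by
    intro x
    refine MeasurableSet.inter (measurableSet_le measurable_const ?_) measurableSet_Icc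
    exact ((hm.comp (measurable_const_add x)).sub_const _).abs
  have ht : Tendsto (fun x => volume (A x)) atTop (𝓝 (volume (∅ : Set ℝ))) := by
    refine tendsto_measure_of_tendsto_indicator atTop hA (B := Set.Icc 0 2) measurableSet_Icc
      (by simp) (Eventually.of_forall fun i => Set.inter_subset_right) ?_
    intro v
    have h1 := (hl v).abs
    rw [abs_zero] at h1
    filter_upwards [h1.eventually_lt_const hε] with x hx
    simp only [A, Set.mem_inter_iff, Set.mem_setOf_eq, Set.mem_empty_iff_false, iff_false]
    rintro ⟨h2, -⟩
    exact absurd h2 (not_le.mpr hx)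
  rw [measure_empty] at ht
  have hev := ht.eventually_lt_const (show (0 : ENNReal) < 1 / 2 by simp)
  obtain ⟨X, hX⟩ := eventually_atTop.1 hev
  refine ⟨X, fun x hx u hu => ?_⟩
  have h1 := hX x hx
  have h2 := hX (x + u) (by linarith [hu.1])
  rw [← measure_preimage_add_right volume (-u) (A (x + u))] at h2
  have h3 : volume (A x ∪ (fun v => v + -u) ⁻¹' A (x + u)) < volume (Set.Icc (1:ℝ) 2) := by
    refine (measure_union_le _ _).trans_lt ((ENNReal.add_lt_add h1 h2).trans_le ?_)
    rw [Real.volume_Icc, ENNReal.add_halves]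
    norm_num
  have h4 : ¬ Set.Icc (1:ℝ) 2 ⊆ A x ∪ (fun v => v + -u) ⁻¹' A (x + u) := fun hs =>
    absurd (measure_mono hs) (not_le.mpr h3)
  obtain ⟨v, hv, hv'⟩ := Set.not_subset.1 h4
  have h5 : |h (x + v) - h x| < ε := by
    by_contra hc
    exact hv' (Or.inl ⟨not_lt.1 hc, by linarith [hv.1], hv.2⟩)
  have h6 : |h (x + v) - h (x + u)| < ε := by
    by_contra hc
    refine hv' (Or.inr ⟨?_, ?_, ?_⟩)
    · have : x + u + (v + -u) = x + v := by ring
      simp only [Set.mem_setOf_eq, this]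
      exact not_lt.1 hc
    · linarith [hv.1, hu.2]
    · linarith [hv.2, hu.1]
  rw [abs_lt] at h5 h6
  rw [abs_le]
  constructor <;> linarith [h5.1, h5.2, h6.1, h6.2]

/-- Karamata representation theorem for a slowly varying function of class `𝓜`. -/
theorem slowly_varying_karamata_representation
    (φ : ℝ → ℝ) (hφ : SlowlyVaryingM φ) :
    ∃ (c : ℝ) (η e : ℝ → ℝ), Measurable η ∧ Measurable e ∧
      Tendsto η atTop (𝓝 c) ∧ Tendsto e atTop (𝓝 0) ∧
      ∀ t : ℝ, 1 ≤ t → φ t = Real.exp (η t + ∫ u in (1:ℝ)..t, e u / u) := by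
  obtain ⟨hm, hpos, hbd, hsv⟩ := hφ
  obtain ⟨L, hL⟩ : ∃ L : ℝ → ℝ, L = fun u => if 1 ≤ u then Real.log (φ u) else 0 := ⟨_, rfl⟩
  have hL1 : ∀ u, 1 ≤ u → L u = Real.log (φ u) := fun u hu => by simp [hL, hu]
  have hL0 : ∀ u, ¬ 1 ≤ u → L u = 0 := fun u hu => by simp [hL, hu]
  have hLm : Measurable L := by
    rw [hL]
    exact Measurable.ite measurableSet_Ici (Real.measurable_log.comp hm) measurable_const
  have hLb : ∀ b : ℝ, 1 < b → ∃ M, ∀ u ≤ b, |L u / u| ≤ M := by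
    intro b hb
    obtain ⟨C, hC, hCb⟩ := hbd b hb
    refine ⟨|Real.log C|, fun u hu => ?_⟩
    by_cases h1 : 1 ≤ u
    · have hp := hpos u h1
      obtain ⟨h2, h3⟩ := hCb u ⟨h1, hu⟩
      have h4 : Real.log (φ u) ≤ Real.log C := Real.log_le_log hp h2
      have h5 : Real.log (1 / φ u) ≤ Real.log C := Real.log_le_log (by positivity) h3
      rw [one_div, Real.log_inv] at h5
      rw [abs_div, abs_of_pos (by linarith : 0 < u), hL1 u h1]
      refine (div_le_self (abs_nonneg _) h1).trans ?_
      refine (abs_le.2 ⟨by linarith, h4⟩).trans (le_abs_self _)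
    · simp [hL0 u h1]
  have hGi : ∀ a b : ℝ, IntervalIntegrable (fun u => L u / u) volume a b := by
    intro a b
    obtain ⟨M, hM⟩ := hLb (max (max a b) 2) (lt_max_of_lt_right (by norm_num))
    rw [intervalIntegrable_iff]
    refine Measure.integrableOn_of_bounded (M := M) (by simp [Set.uIoc])
      (hLm.div measurable_id).aestronglyMeasurable ?_
    refine (ae_restrict_iff' measurableSet_uIoc).2 (Eventually.of_forall fun u hu => ?_)
    exact hM u (hu.2.trans (le_max_left _ _))
  have hlim : ∀ lam : ℝ, 0 < lam → Tendsto (fun t => L (lam * t) - L t) atTop (𝓝 0) := by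
    intro lam hlam
    have h1 := (hsv lam hlam).log one_ne_zero
    rw [Real.log_one] at h1
    refine h1.congr' ?_
    filter_upwards [eventually_ge_atTop 1,
      (tendsto_id.const_mul_atTop hlam).eventually_ge_atTop 1] with t ht ht'
    simp only [id] at ht'
    rw [hL1 t ht, hL1 _ ht', Real.log_div (hpos _ ht').ne' (hpos _ ht).ne']
  obtain ⟨E, hE⟩ : ∃ E, E = Real.exp 1 := ⟨_, rfl⟩
  have hE1 : 1 < E := by rw [hE]; exact Real.one_lt_exp_iff.2 one_pos
  have hE0 : 0 < E := by linarith
  have huct : ∀ ε > 0, ∃ T : ℝ, ∀ t ≥ T, ∀ v ∈ Set.Icc 1 E, |L (t * v) - L t| ≤ ε := by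
    intro ε hε
    obtain ⟨X, hX⟩ := karamata_uct (fun x => L (Real.exp x)) (hLm.comp Real.measurable_exp)
      (by
        intro u
        refine ((hlim (Real.exp u) (Real.exp_pos u)).comp Real.tendsto_exp_atTop).congr fun x => ?_
        simp [Real.exp_add, mul_comm]) (ε / 2) (by positivity)
    refine ⟨Real.exp X, fun t ht v hv => ?_⟩
    have ht0 : 0 < t := (Real.exp_pos X).trans_le ht
    have hv0 : 0 < v := one_pos.trans_le hv.1
    have := hX (Real.log t) ((Real.le_log_iff_exp_le ht0).2 ht) (Real.log v)
      ⟨Real.log_nonneg hv.1, by rw [Real.log_le_iff_le_exp hv0, ← hE]; exact hv.2⟩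
    simp only [Real.exp_add, Real.exp_log ht0, Real.exp_log hv0] at this
    linarith
  obtain ⟨e, he⟩ : ∃ e : ℝ → ℝ, e = fun u => if 1 ≤ u then L (E * u) - L u else 0 := ⟨_, rfl⟩
  have he1 : ∀ u, 1 ≤ u → e u = L (E * u) - L u := fun u hu => by simp [he, hu]
  have hem : Measurable e := by
    rw [he]
    exact Measurable.ite measurableSet_Ici ((hLm.comp (measurable_const_mul E)).sub hLm)
      measurable_const
  -- the shifted function
  have hGs : ∀ a b : ℝ, IntervalIntegrable (fun u => L (E * u) / u) volume a b := by
    intro a b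
    have h1 := ((hGi (E * a) (E * b)).comp_mul_left (c := E)).const_mul E
    simp only [mul_div_cancel_left₀ _ hE0.ne'] at h1
    refine h1.congr (fun u _ => ?_)
    show E * (L (E * u) / (E * u)) = L (E * u) / u
    rw [mul_div_assoc', mul_div_mul_left _ _ hE0.ne']
  have hei : ∀ a b : ℝ, IntervalIntegrable (fun u => e u / u) volume a b := by
    intro a b
    have h1 := ((hGs a b).sub (hGi a b))
    rw [intervalIntegrable_iff] at h1 ⊢
    refine Integrable.mono h1 (hem.div measurable_id).aestronglyMeasurable
      (Eventually.of_forall fun u => ?_)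
    by_cases hu : 1 ≤ u
    · simp [he1 u hu, sub_div]
    · simp [he, hu]
  have hinv : ∫ v in (1:ℝ)..E, 1 / v = 1 := by
    rw [integral_one_div_of_pos one_pos hE0, hE]; simp
  have hkey : ∀ t, 1 ≤ t → L t - ∫ u in (1:ℝ)..t, e u / u =
      (∫ v in (1:ℝ)..E, L v / v) - ∫ v in (1:ℝ)..E, (L (t * v) - L t) / v := by
    intro t ht
    have ht0 : 0 < t := by linarith
    have scale : ∀ (s a b : ℝ), 0 < s →
        ∫ u in a..b, L (s * u) / u = ∫ u in (s * a)..(s * b), L u / u := by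
      intro s a b hs
      have h1 := intervalIntegral.integral_comp_mul_left (a := a) (b := b)
        (fun u => L u / u) hs.ne'
      rw [smul_eq_mul, eq_inv_mul_iff_mul_eq₀ hs.ne', ← intervalIntegral.integral_const_mul] at h1
      rw [← h1]
      congr 1
      ext u
      rw [mul_div_assoc', mul_div_mul_left _ _ hs.ne']
    have h1 : ∫ u in (1:ℝ)..t, e u / u =
        (∫ u in (1:ℝ)..t, L (E * u) / u) - ∫ u in (1:ℝ)..t, L u / u := by
      rw [← intervalIntegral.integral_sub (hGs _ _) (hGi _ _)]
      refine intervalIntegral.integral_congr fun u hu => ?_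
      rw [Set.uIcc_of_le ht] at hu
      simp [he1 u hu.1, sub_div]
    have hti : IntervalIntegrable (fun v => L (t * v) / v) volume 1 E := by
      have h1 := ((hGi (t * 1) (t * E)).comp_mul_left (c := t)).const_mul t
      simp only [mul_div_cancel_left₀ _ ht0.ne'] at h1
      refine h1.congr (fun u _ => ?_)
      show t * (L (t * u) / (t * u)) = L (t * u) / u
      rw [mul_div_assoc', mul_div_mul_left _ _ ht0.ne']
    have hci : IntervalIntegrable (fun v : ℝ => L t * (1 / v)) volume 1 E := by
      refine IntervalIntegrable.const_mul ?_ _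
      refine intervalIntegral.intervalIntegrable_one_div (fun x hx => ?_) continuousOn_id
      rw [Set.uIcc_of_le hE1.le] at hx
      have := hx.1
      linarith
    have h2 : ∫ v in (1:ℝ)..E, (L (t * v) - L t) / v =
        (∫ v in (1:ℝ)..E, L (t * v) / v) - L t := by
      have : L t = ∫ v in (1:ℝ)..E, L t * (1 / v) := by
        rw [intervalIntegral.integral_const_mul, hinv, mul_one]
      conv_rhs => rw [this]
      rw [← intervalIntegral.integral_sub hti hci]
      congr 1
      ext v
      ring
    rw [h1, h2, scale E 1 t hE0, scale t 1 E ht0, mul_one, mul_one, mul_comm t E]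
    have e1 := intervalIntegral.integral_add_adjacent_intervals (hGi 1 E) (hGi E (E * t))
    have e2 := intervalIntegral.integral_add_adjacent_intervals (hGi 1 t) (hGi t (E * t))
    linarith
  refine ⟨∫ v in (1:ℝ)..E, L v / v, fun t => L t - ∫ u in (1:ℝ)..t, e u / u, e, ?_, hem, ?_, ?_, ?_⟩
  · exact hLm.sub (intervalIntegral.continuous_primitive hei 1).measurable
  · have h0 : Tendsto (fun t => ∫ v in (1:ℝ)..E, (L (t * v) - L t) / v) atTop (𝓝 0) := by
      rw [Metric.tendsto_atTop]
      intro ε hε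
      obtain ⟨T, hT⟩ := huct (ε / (2 * E)) (by positivity)
      refine ⟨T, fun t ht => ?_⟩
      rw [dist_zero_right]
      have hb := intervalIntegral.norm_integral_le_of_norm_le_const (a := 1) (b := E)
        (C := ε / (2 * E)) (f := fun v => (L (t * v) - L t) / v) (by
          intro v hv
          rw [Set.uIoc_of_le hE1.le] at hv
          rw [Real.norm_eq_abs, abs_div, abs_of_pos (by linarith [hv.1] : 0 < v)]
          exact (div_le_self (abs_nonneg _) hv.1.le).trans (hT t ht v ⟨hv.1.le, hv.2⟩))
      refine hb.trans_lt ?_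
      rw [abs_of_pos (by linarith)]
      have : ε / (2 * E) * (E - 1) < ε / (2 * E) * (2 * E) :=
        mul_lt_mul_of_pos_left (by linarith) (by positivity)
      rwa [div_mul_cancel₀ _ (by positivity)] at this
    have h1 := h0.const_sub (∫ v in (1:ℝ)..E, L v / v)
    rw [sub_zero] at h1
    refine h1.congr' ?_
    filter_upwards [eventually_ge_atTop 1] with t ht
    exact (hkey t ht).symm
  · refine (hlim E hE0).congr' ?_
    filter_upwards [eventually_ge_atTop 1] with t ht
    exact (he1 t ht).symm
  · intro t ht
    simp only [sub_add_cancel]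
    rw [hL1 t ht, Real.exp_log (hpos t ht)]
end

section
/- Let φ be a function of the class 𝓜 satisfying the Hörmander condition ∫₁^{+∞} dt/(t φ(t)²) < ∞, let n ≥ 1 and let ρ ≥ 0 be an integer. If g : ℝⁿ → ℂ is Lebesgue measurable and ∫_{ℝⁿ} ⟨ξ⟩^{2ρ+n} φ(⟨ξ⟩)² |g(ξ)|² dξ < ∞, then the function ξ ↦ ⟨ξ⟩^{ρ} g(ξ) is Lebesgue integrable on ℝⁿ; moreover ∫_{ℝⁿ} ⟨ξ⟩^{ρ}|g(ξ)| dξ ≤ ( ∫_{ℝⁿ} ⟨ξ⟩^{2ρ+n} φ(⟨ξ⟩)² |g(ξ)|² dξ )^{1/2} · ( ∫_{ℝⁿ} ⟨ξ⟩^{−n} φ(⟨ξ⟩)^{−2} dξ )^{1/2}. -/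
open MeasureTheory Filter Topology

/-- The "Japanese bracket" `⟨ξ⟩ := (1 + |ξ|²)^{1/2}` of a point `ξ ∈ ℝⁿ`. -/
noncomputable def jbracket {n : ℕ} (ξ : EuclideanSpace ℝ (Fin n)) : ℝ :=
  Real.sqrt (1 + ‖ξ‖ ^ 2)

lemma aux_one_le (r : ℝ) : 1 ≤ Real.sqrt (1 + r ^ 2) := by
  rw [Real.one_le_sqrt]; nlinarith [sq_nonneg r]

lemma aux_cov (h : ℝ → ENNReal) :
    (∫⁻ r in Set.Ioi (1:ℝ), h (Real.sqrt (1 + r ^ 2))) ≤ 2 * ∫⁻ t in Set.Ioi (1:ℝ), h t := by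
  have key := lintegral_image_eq_lintegral_abs_deriv_mul (s := Set.Ioi (1:ℝ))
    (f := fun r : ℝ => Real.sqrt (1 + r ^ 2)) (f' := fun r => r / Real.sqrt (1 + r ^ 2))
    measurableSet_Ioi
    (by
      intro x hx
      have h1 : HasDerivAt (fun r : ℝ => 1 + r ^ 2) (2 * x) x := by
        simpa using ((hasDerivAt_id x).pow 2).const_add 1
      have h2 := h1.sqrt (by positivity)
      refine (h2.congr_deriv ?_).hasDerivWithinAt
      have := aux_one_le x
      field_simp)
    (by
      intro x hx y hy hxy
      simp only [Set.mem_Ioi] at hx hy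
      have := (Real.sqrt_inj (by positivity) (by positivity)).1 hxy
      nlinarith) h
  have himg : (fun r : ℝ => Real.sqrt (1 + r ^ 2)) '' Set.Ioi (1:ℝ) ⊆ Set.Ioi (1:ℝ) := by
    rintro _ ⟨x, hx, rfl⟩
    simp only [Set.mem_Ioi] at hx ⊢
    rw [Real.lt_sqrt (by norm_num)]; nlinarith
  calc (∫⁻ r in Set.Ioi (1:ℝ), h (Real.sqrt (1 + r ^ 2)))
      ≤ ∫⁻ r in Set.Ioi (1:ℝ), 2 * (ENNReal.ofReal |r / Real.sqrt (1 + r ^ 2)|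
          * h (Real.sqrt (1 + r ^ 2))) := by
        refine setLIntegral_mono' measurableSet_Ioi ?_
        intro r hr
        simp only [Set.mem_Ioi] at hr
        have h1 := aux_one_le r
        have h2 : Real.sqrt (1 + r ^ 2) ≤ 2 * r := by
          rw [Real.sqrt_le_left (by linarith)]; nlinarith
        have h3 : (1:ENNReal) ≤ 2 * ENNReal.ofReal |r / Real.sqrt (1 + r ^ 2)| := by
          have : (2:ENNReal) = ENNReal.ofReal 2 := by simp
          rw [this, ← ENNReal.ofReal_mul (by norm_num), ENNReal.one_le_ofReal,
            abs_of_nonneg (by positivity), ← mul_div_assoc, le_div_iff₀ (by linarith)]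
          linarith
        rw [← mul_assoc]
        calc h (Real.sqrt (1 + r ^ 2)) = 1 * h (Real.sqrt (1 + r ^ 2)) := (one_mul _).symm
          _ ≤ _ := by gcongr
    _ = 2 * ∫⁻ t in (fun r : ℝ => Real.sqrt (1 + r ^ 2)) '' Set.Ioi (1:ℝ), h t := by
        rw [lintegral_const_mul' _ _ (by simp), key]
    _ ≤ _ := by
        gcongr

lemma aux_finite (φ : ℝ → ℝ) (hφ : SlowlyVaryingM φ)
    (hH : (∫⁻ t in Set.Ioi (1:ℝ), ENNReal.ofReal (1 / (t * φ t ^ 2))) < ⊤)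
    (n : ℕ) (hn : 1 ≤ n) :
    (∫⁻ ξ : EuclideanSpace ℝ (Fin n), ENNReal.ofReal
              (jbracket ξ ^ (-(n:ℝ)) * φ (jbracket ξ) ^ (-2 : ℝ))) < ⊤ := by
  obtain ⟨hm, hpos, hbd, -⟩ := hφ
  haveI : Nontrivial (EuclideanSpace ℝ (Fin n)) := by
    apply Module.nontrivial_of_finrank_pos (R := ℝ)
    simp; omega
  let F : ℝ → ℝ := fun r =>
    Real.sqrt (1 + r ^ 2) ^ (-(n:ℝ)) * φ (Real.sqrt (1 + r ^ 2)) ^ (-2 : ℝ)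
  have hFm : Measurable F := by
    have hs : Measurable (fun r : ℝ => Real.sqrt (1 + r ^ 2)) := by fun_prop
    exact (hs.pow_const _).mul ((hm.comp hs).pow_const _)
  have hF0 : ∀ r, 0 ≤ F r := fun r => by
    have h1 := aux_one_le r
    have h2 := hpos _ h1
    positivity
  -- pointwise bound
  have hbound : ∀ r, 0 < r → r ^ (n - 1) * F r ≤
      1 / (Real.sqrt (1 + r ^ 2) * φ (Real.sqrt (1 + r ^ 2)) ^ 2) := by
    intro r hr
    have h1 := aux_one_le r
    have h2 := hpos _ h1
    have h3 : r ≤ Real.sqrt (1 + r ^ 2) := Real.le_sqrt_of_sq_le (by linarith)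
    simp only [F]
    set t := Real.sqrt (1 + r ^ 2)
    have ht : 0 < t := by linarith
    rw [Real.rpow_neg ht.le, Real.rpow_neg h2.le, Real.rpow_natCast]
    have e2 : φ t ^ (2:ℝ) = φ t ^ 2 := by exact_mod_cast Real.rpow_natCast (φ t) 2
    rw [e2]
    obtain ⟨m, rfl⟩ : ∃ m, n = m + 1 := ⟨n - 1, by omega⟩
    have h4 : r ^ m ≤ t ^ m := by gcongr
    have h5 : r ^ m * (t ^ (m+1))⁻¹ ≤ 1 / t := by
      rw [← div_eq_mul_inv, div_le_div_iff₀ (by positivity) ht, pow_succ]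
      nlinarith
    calc r ^ (m + 1 - 1) * ((t ^ (m+1))⁻¹ * (φ t ^ 2)⁻¹)
        = (r ^ m * (t ^ (m+1))⁻¹) * (φ t ^ 2)⁻¹ := by simp; ring
      _ ≤ (1 / t) * (φ t ^ 2)⁻¹ := by gcongr
      _ = _ := by field_simp
  have hint : Integrable (fun ξ : EuclideanSpace ℝ (Fin n) => F ‖ξ‖) := by
    rw [integrable_fun_norm_addHaar volume (f := F)]
    simp only [finrank_euclideanSpace, Fintype.card_fin, smul_eq_mul]
    have hmeas : Measurable (fun y : ℝ => y ^ (n - 1) * F y) := by fun_prop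
    have hsplit : Set.Ioi (0:ℝ) = Set.Ioc 0 1 ∪ Set.Ioi 1 :=
      (Set.Ioc_union_Ioi_eq_Ioi zero_le_one).symm
    rw [hsplit]
    apply IntegrableOn.union
    · obtain ⟨C, hC, hC'⟩ := hbd 2 (by norm_num)
      refine Measure.integrableOn_of_bounded (M := C ^ 2) (by simp)
        hmeas.aestronglyMeasurable ?_
      filter_upwards [ae_restrict_mem measurableSet_Ioc] with r hr
      have h1 := aux_one_le r
      have h2 := hpos _ h1
      rw [Real.norm_of_nonneg (mul_nonneg (pow_nonneg hr.1.le _) (hF0 r))]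
      refine (hbound r hr.1).trans ?_
      have h3 : Real.sqrt (1 + r ^ 2) ≤ 2 := by
        rw [Real.sqrt_le_left (by norm_num)]; nlinarith [hr.1, hr.2]
      have h4 := (hC' _ ⟨h1, h3⟩).2
      set t := Real.sqrt (1 + r ^ 2)
      calc 1 / (t * φ t ^ 2) ≤ 1 / (1 * φ t ^ 2) := by gcongr
        _ = (1 / φ t) ^ 2 := by field_simp
        _ ≤ C ^ 2 := by gcongr
    · refine ⟨hmeas.aestronglyMeasurable, ?_⟩
      rw [hasFiniteIntegral_iff_norm]
      refine lt_of_le_of_lt ?_ ((aux_cov (fun t => ENNReal.ofReal (1 / (t * φ t ^ 2)))).trans_lt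
        (ENNReal.mul_lt_top (by simp) hH))
      refine setLIntegral_mono' measurableSet_Ioi ?_
      intro r hr
      have hr0 : 0 < r := lt_trans zero_lt_one hr
      rw [Real.norm_of_nonneg (mul_nonneg (pow_nonneg hr0.le _) (hF0 r))]
      exact ENNReal.ofReal_le_ofReal (hbound r hr0)
  have := hint.2
  rw [hasFiniteIntegral_iff_norm] at this
  refine lt_of_le_of_lt (lintegral_mono fun ξ => ?_) this
  exact ENNReal.ofReal_le_ofReal (le_abs_self _)

/-- Under the Hörmander condition, the weighted Cauchy–Schwarz inequality shows that
`⟨ξ⟩^ρ g(ξ)` is integrable whenever `∫ ⟨ξ⟩^{2ρ+n} φ(⟨ξ⟩)² |g(ξ)|² dξ < ∞`. -/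
theorem integrable_of_refined_weighted_square_integrable
    (φ : ℝ → ℝ) (hφ : SlowlyVaryingM φ)
    (hH : (∫⁻ t in Set.Ioi (1:ℝ), ENNReal.ofReal (1 / (t * φ t ^ 2))) < ⊤)
    (n : ℕ) (hn : 1 ≤ n) (ρ : ℕ)
    (g : EuclideanSpace ℝ (Fin n) → ℂ) (hg : Measurable g)
    (hfin : (∫⁻ ξ, ENNReal.ofReal
        (jbracket ξ ^ (2 * (ρ:ℝ) + n) * φ (jbracket ξ) ^ 2 * ‖g ξ‖ ^ 2)) < ⊤) :
    Integrable (fun ξ : EuclideanSpace ℝ (Fin n) => jbracket ξ ^ (ρ:ℝ) * ‖g ξ‖) ∧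
      (∫⁻ ξ, ENNReal.ofReal (jbracket ξ ^ (ρ:ℝ) * ‖g ξ‖))
        ≤ (∫⁻ ξ, ENNReal.ofReal
              (jbracket ξ ^ (2 * (ρ:ℝ) + n) * φ (jbracket ξ) ^ 2 * ‖g ξ‖ ^ 2)) ^ (1/2 : ℝ)
          * (∫⁻ ξ : EuclideanSpace ℝ (Fin n), ENNReal.ofReal
              (jbracket ξ ^ (-(n:ℝ)) * φ (jbracket ξ) ^ (-2 : ℝ))) ^ (1/2 : ℝ) := by
  have hfin2 := aux_finite φ hφ hH n hn
  obtain ⟨hm, hpos, -, -⟩ := hφ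
  have hj : Measurable (jbracket : EuclideanSpace ℝ (Fin n) → ℝ) := by
    unfold jbracket; fun_prop
  have h1 : ∀ ξ : EuclideanSpace ℝ (Fin n), 1 ≤ jbracket ξ := fun ξ => aux_one_le _
  have hφj : Measurable (fun ξ : EuclideanSpace ℝ (Fin n) => φ (jbracket ξ)) := hm.comp hj
  have main : (∫⁻ ξ, ENNReal.ofReal (jbracket ξ ^ (ρ:ℝ) * ‖g ξ‖))
        ≤ (∫⁻ ξ, ENNReal.ofReal
              (jbracket ξ ^ (2 * (ρ:ℝ) + n) * φ (jbracket ξ) ^ 2 * ‖g ξ‖ ^ 2)) ^ (1/2 : ℝ)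
          * (∫⁻ ξ : EuclideanSpace ℝ (Fin n), ENNReal.ofReal
              (jbracket ξ ^ (-(n:ℝ)) * φ (jbracket ξ) ^ (-2 : ℝ))) ^ (1/2 : ℝ) := by
    have hold := ENNReal.lintegral_mul_le_Lp_mul_Lq
      (volume : Measure (EuclideanSpace ℝ (Fin n))) Real.HolderConjugate.two_two
      (f := fun ξ => ENNReal.ofReal
        (jbracket ξ ^ ((ρ:ℝ) + n / 2) * φ (jbracket ξ) * ‖g ξ‖))
      (g := fun ξ => ENNReal.ofReal (jbracket ξ ^ (-(n:ℝ) / 2) * (φ (jbracket ξ))⁻¹))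
      (((hj.pow_const _).mul hφj).mul hg.norm).ennreal_ofReal.aemeasurable
      ((hj.pow_const _).mul hφj.inv).ennreal_ofReal.aemeasurable
    refine le_trans (le_of_eq ?_) (hold.trans (le_of_eq ?_))
    · refine lintegral_congr fun ξ => ?_
      have hj1 := h1 ξ
      have hp := hpos _ hj1
      have hj0 : 0 < jbracket ξ := by linarith
      simp only [Pi.mul_apply]
      rw [← ENNReal.ofReal_mul (by positivity)]
      congr 1
      have : jbracket ξ ^ (ρ:ℝ)
          = jbracket ξ ^ ((ρ:ℝ) + n / 2) * jbracket ξ ^ (-(n:ℝ) / 2) := by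
        rw [← Real.rpow_add hj0]; congr 1; ring
      rw [this]
      field_simp
    · congr 2
      · refine lintegral_congr fun ξ => ?_
        have hj1 := h1 ξ
        have hp := hpos _ hj1
        have hj0 : 0 < jbracket ξ := by linarith
        rw [ENNReal.ofReal_rpow_of_nonneg (by positivity) (by norm_num), Real.rpow_two]
        congr 1
        have : jbracket ξ ^ (2 * (ρ:ℝ) + n) = (jbracket ξ ^ ((ρ:ℝ) + n / 2)) ^ 2 := by
          rw [← Real.rpow_mul_natCast hj0.le]; congr 1; push_cast; ring
        rw [this]; ring
      · refine lintegral_congr fun ξ => ?_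
        have hj1 := h1 ξ
        have hp := hpos _ hj1
        have hj0 : 0 < jbracket ξ := by linarith
        rw [ENNReal.ofReal_rpow_of_nonneg (by positivity) (by norm_num), Real.rpow_two]
        congr 1
        have : jbracket ξ ^ (-(n:ℝ)) = (jbracket ξ ^ (-(n:ℝ) / 2)) ^ 2 := by
          rw [← Real.rpow_mul_natCast hj0.le]; congr 1; push_cast; ring
        rw [this, Real.rpow_neg hp.le, Real.rpow_two, mul_pow, inv_pow]
  refine ⟨⟨((hj.pow_const _).mul hg.norm).aestronglyMeasurable, ?_⟩, main⟩
  rw [hasFiniteIntegral_iff_norm]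
  refine lt_of_le_of_lt (le_trans (le_of_eq ?_) main) (ENNReal.mul_lt_top
    (ENNReal.rpow_lt_top_of_nonneg (by norm_num) hfin.ne)
    (ENNReal.rpow_lt_top_of_nonneg (by norm_num) hfin2.ne))
  refine lintegral_congr fun ξ => ?_
  have hj1 := h1 ξ
  rw [Real.norm_of_nonneg (by positivity)]
end

section
/- (Hörmander-type embedding into C^ρ, Euclidean version of Proposition 2, sufficiency) Let φ be a function of the class 𝓜 satisfying ∫₁^{+∞} dt/(t φ(t)²) < ∞, let n ≥ 1 and let ρ ≥ 0 be an integer. If g : ℝⁿ → ℂ is Lebesgue measurable and ∫_{ℝⁿ} ⟨ξ⟩^{2ρ+n} φ(⟨ξ⟩)² |g(ξ)|² dξ < ∞, then the function u(x) := ∫_{ℝⁿ} e^{2πi x·ξ} g(ξ) dξ is well defined and ρ-times continuously differentiable on ℝⁿ (of class C^ρ). -/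
open MeasureTheory Filter Topology

theorem hh_one_le_jb {n : ℕ} (ξ : EuclideanSpace ℝ (Fin n)) : 1 ≤ jbracket ξ := by
  unfold jbracket
  rw [Real.one_le_sqrt]
  nlinarith [sq_nonneg ‖ξ‖]

theorem hh_norm_le_jb {n : ℕ} (ξ : EuclideanSpace ℝ (Fin n)) : ‖ξ‖ ≤ jbracket ξ := by
  unfold jbracket
  apply Real.le_sqrt_of_sq_le
  linarith

theorem hh_weight (φ : ℝ → ℝ) (hφ : SlowlyVaryingM φ)
    (hH : (∫⁻ t in Set.Ioi (1:ℝ), ENNReal.ofReal (1 / (t * φ t ^ 2))) < ⊤)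
    (n : ℕ) (hn : 1 ≤ n) :
    Integrable (fun ξ : EuclideanSpace ℝ (Fin n) =>
      1 / (jbracket ξ ^ n * φ (jbracket ξ) ^ 2)) := by
  obtain ⟨hm, hpos, hbd, -⟩ := hφ
  have : Nonempty (Fin n) := ⟨⟨0, hn⟩⟩
  have h1 : IntegrableOn (fun t : ℝ => 1 / (t * φ t ^ 2)) (Set.Ioi 1) := by
    refine (lintegral_ofReal_ne_top_iff_integrable ?_ ?_).1 hH.ne
    · exact (by fun_prop : Measurable fun t : ℝ => 1 / (t * φ t ^ 2)).aestronglyMeasurable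
    · filter_upwards [ae_restrict_mem measurableSet_Ioi] with t ht
      have : (1:ℝ) < t := ht
      show 0 ≤ 1 / (t * φ t ^ 2)
      positivity
  have hs : ∀ r : ℝ, 0 < 1 + r ^ 2 := fun r => by positivity
  have hone : ∀ r : ℝ, 1 ≤ Real.sqrt (1 + r ^ 2) := fun r => by
    rw [Real.one_le_sqrt]; nlinarith [sq_nonneg r]
  have hle : ∀ r : ℝ, r ≤ Real.sqrt (1 + r ^ 2) := fun r => by
    apply Real.le_sqrt_of_sq_le; linarith
  have h2 : IntegrableOn (fun r : ℝ => |r / Real.sqrt (1 + r ^ 2)| •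
      (1 / (Real.sqrt (1 + r ^ 2) * φ (Real.sqrt (1 + r ^ 2)) ^ 2))) (Set.Ioi 1) := by
    refine (integrableOn_image_iff_integrableOn_abs_deriv_smul (s := Set.Ioi (1:ℝ))
      (f := fun r => Real.sqrt (1 + r ^ 2)) (f' := fun r => r / Real.sqrt (1 + r ^ 2))
      measurableSet_Ioi ?_ ?_ (fun t : ℝ => 1 / (t * φ t ^ 2))).1 ?_
    · intro r _
      have : HasDerivAt (fun r : ℝ => Real.sqrt (1 + r ^ 2)) _ r :=
        (((hasDerivAt_id r).pow 2).const_add 1).sqrt (hs r).ne'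
      refine (this.congr_deriv ?_).hasDerivWithinAt
      simp
      field_simp
    · intro a ha b hb hab
      have ha' : (1:ℝ) < a := ha
      have hb' : (1:ℝ) < b := hb
      have := (Real.sqrt_inj (hs a).le (hs b).le).1 hab
      nlinarith
    · refine h1.mono_set ?_
      rintro _ ⟨r, hr, rfl⟩
      have hr' : (1:ℝ) < r := hr
      exact hr'.trans_le (hle r)
  have key : IntegrableOn (fun y : ℝ => y ^ (n - 1) •
      (1 / (Real.sqrt (1 + y ^ 2) ^ n * φ (Real.sqrt (1 + y ^ 2)) ^ 2))) (Set.Ioi 0) := by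
    have hmeas : Measurable (fun y : ℝ => y ^ (n - 1) •
      (1 / (Real.sqrt (1 + y ^ 2) ^ n * φ (Real.sqrt (1 + y ^ 2)) ^ 2))) := by
      have : Measurable fun y : ℝ => φ (Real.sqrt (1 + y ^ 2)) :=
        hm.comp (by fun_prop)
      fun_prop
    have hb1 : ∀ y : ℝ, 0 < y → ‖y ^ (n - 1) •
      (1 / (Real.sqrt (1 + y ^ 2) ^ n * φ (Real.sqrt (1 + y ^ 2)) ^ 2))‖ ≤
        1 / (Real.sqrt (1 + y ^ 2) * φ (Real.sqrt (1 + y ^ 2)) ^ 2) := by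
      intro y hy
      have e1 := hone y
      have e2 := hle y
      have e3 := hpos _ e1
      set s := Real.sqrt (1 + y ^ 2)
      have hs0 : 0 < s := by linarith
      rw [Real.norm_of_nonneg (by positivity), smul_eq_mul]
      have : y ^ (n - 1) ≤ s ^ (n - 1) := by gcongr
      have h4 : s ^ n = s ^ (n - 1) * s := by
        rw [← pow_succ]; congr 1; omega
      rw [h4, mul_one_div, div_le_div_iff₀ (by positivity) (by positivity)]
      have : 0 ≤ s * φ s ^ 2 := by positivity
      nlinarith
    rw [← Set.Ioc_union_Ioi_eq_Ioi (zero_le_one (α := ℝ))]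
    refine IntegrableOn.union ?_ ?_
    · obtain ⟨C, hC, hb⟩ := hbd 2 (by norm_num)
      refine IntegrableOn.of_bound (C := C ^ 2) (by simp) hmeas.aestronglyMeasurable ?_
      filter_upwards [ae_restrict_mem measurableSet_Ioc] with y hy
      refine (hb1 y hy.1).trans ?_
      have e1 := hone y
      have e3 := hpos _ e1
      have e4 : Real.sqrt (1 + y ^ 2) ≤ 2 := by
        apply Real.sqrt_le_iff.2; constructor <;> nlinarith [hy.1, hy.2]
      have e5 := (hb _ ⟨e1, e4⟩).2
      set s := Real.sqrt (1 + y ^ 2)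
      calc 1 / (s * φ s ^ 2) ≤ 1 / (1 * φ s ^ 2) := by gcongr
        _ = (1 / φ s) ^ 2 := by field_simp
        _ ≤ C ^ 2 := by gcongr
    · refine Integrable.mono' (h2.const_mul 2) hmeas.aestronglyMeasurable ?_
      filter_upwards [ae_restrict_mem measurableSet_Ioi] with y hy
      have hy' : (1:ℝ) < y := hy
      refine (hb1 y (by linarith)).trans ?_
      have e1 := hone y
      have e4 : Real.sqrt (1 + y ^ 2) ≤ 2 * y := by
        apply Real.sqrt_le_iff.2; constructor <;> nlinarith
      have e3 := hpos _ e1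
      set s := Real.sqrt (1 + y ^ 2)
      have hs0 : 0 < s := by linarith
      rw [abs_of_nonneg (by positivity), smul_eq_mul, ← mul_assoc]
      apply le_mul_of_one_le_left (by positivity)
      rw [← mul_div_assoc, one_le_div hs0]
      exact e4
  have := (integrable_fun_norm_addHaar (volume : Measure (EuclideanSpace ℝ (Fin n)))
    (f := fun y : ℝ => 1 / (Real.sqrt (1 + y ^ 2) ^ n * φ (Real.sqrt (1 + y ^ 2)) ^ 2))).2
    (by simpa using key)
  exact this

theorem hh_moment (φ : ℝ → ℝ) (hφ : SlowlyVaryingM φ)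
    (hH : (∫⁻ t in Set.Ioi (1:ℝ), ENNReal.ofReal (1 / (t * φ t ^ 2))) < ⊤)
    (n : ℕ) (hn : 1 ≤ n) (ρ : ℕ)
    (g : EuclideanSpace ℝ (Fin n) → ℂ) (hg : Measurable g)
    (hfin : (∫⁻ ξ, ENNReal.ofReal
        (jbracket ξ ^ (2 * (ρ:ℝ) + n) * φ (jbracket ξ) ^ 2 * ‖g ξ‖ ^ 2)) < ⊤)
    (k : ℕ) (hk : k ≤ ρ) : Integrable (fun ξ => ‖ξ‖ ^ k * ‖g ξ‖) := by
  have hw := hh_weight φ hφ hH n hn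
  obtain ⟨hm, hpos, -, -⟩ := hφ
  have hj : Measurable (fun ξ : EuclideanSpace ℝ (Fin n) => jbracket ξ) := by
    unfold jbracket; fun_prop
  have hF : Integrable (fun ξ => jbracket ξ ^ (2 * (ρ:ℝ) + n) * φ (jbracket ξ) ^ 2 * ‖g ξ‖ ^ 2) := by
    refine (lintegral_ofReal_ne_top_iff_integrable ?_ ?_).1 hfin.ne
    · have : Measurable (fun ξ : EuclideanSpace ℝ (Fin n) => φ (jbracket ξ)) := hm.comp hj
      exact Measurable.aestronglyMeasurable (by fun_prop)
    · refine Eventually.of_forall fun ξ => ?_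
      have := hh_one_le_jb ξ
      show 0 ≤ jbracket ξ ^ (2 * (ρ:ℝ) + n) * φ (jbracket ξ) ^ 2 * ‖g ξ‖ ^ 2
      positivity
  refine Integrable.mono' (hF.add hw) (Measurable.aestronglyMeasurable (by fun_prop)) ?_
  refine Eventually.of_forall fun ξ => ?_
  have e1 := hh_one_le_jb ξ
  have e2 := hh_norm_le_jb ξ
  have e3 := hpos _ e1
  rw [Real.norm_of_nonneg (by positivity)]
  show _ ≤ jbracket ξ ^ (2 * (ρ:ℝ) + n) * φ (jbracket ξ) ^ 2 * ‖g ξ‖ ^ 2 +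
    1 / (jbracket ξ ^ n * φ (jbracket ξ) ^ 2)
  have e4 : jbracket ξ ^ (2 * (ρ:ℝ) + n) = (jbracket ξ ^ ρ) ^ 2 * jbracket ξ ^ n := by
    rw [← pow_mul, ← pow_add, ← Real.rpow_natCast]
    congr 1; push_cast; ring
  rw [e4]
  set J := jbracket ξ
  have hJ : 0 < J := by linarith
  have e5 : ‖ξ‖ ^ k ≤ J ^ ρ := (by gcongr : ‖ξ‖ ^ k ≤ J ^ k).trans (by gcongr)
  have hP : 0 < J ^ n * φ J ^ 2 := by positivity
  have e6 : ‖ξ‖ ^ k * ‖g ξ‖ ≤ J ^ ρ * ‖g ξ‖ := by gcongr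
  refine e6.trans ?_
  have hA : 0 ≤ J ^ ρ * ‖g ξ‖ := by positivity
  have e7 : (J ^ ρ) ^ 2 * J ^ n * φ J ^ 2 * ‖g ξ‖ ^ 2 =
      (J ^ n * φ J ^ 2) * (J ^ ρ * ‖g ξ‖) ^ 2 := by ring
  rw [e7]
  set P := J ^ n * φ J ^ 2
  set A := J ^ ρ * ‖g ξ‖
  have e8 : P * A ^ 2 + 1 / P = (P ^ 2 * A ^ 2 + 1) / P := by field_simp
  rw [e8, le_div_iff₀ hP]
  nlinarith [sq_nonneg (P * A - 1), mul_nonneg hP.le hA]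

/-- Hörmander-type embedding into `C^ρ` (Euclidean version, sufficiency): under the
Hörmander condition on `φ`, if `∫ ⟨ξ⟩^{2ρ+n} φ(⟨ξ⟩)² |g(ξ)|² dξ < ∞` then the inverse
Fourier transform `u(x) = ∫ e^{2πi x·ξ} g(ξ) dξ` is well defined and of class `C^ρ`. -/
theorem inverse_fourier_contDiff_of_refined_weighted_square_integrable
    (φ : ℝ → ℝ) (hφ : SlowlyVaryingM φ)
    (hH : (∫⁻ t in Set.Ioi (1:ℝ), ENNReal.ofReal (1 / (t * φ t ^ 2))) < ⊤)
    (n : ℕ) (hn : 1 ≤ n) (ρ : ℕ)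
    (g : EuclideanSpace ℝ (Fin n) → ℂ) (hg : Measurable g)
    (hfin : (∫⁻ ξ, ENNReal.ofReal
        (jbracket ξ ^ (2 * (ρ:ℝ) + n) * φ (jbracket ξ) ^ 2 * ‖g ξ‖ ^ 2)) < ⊤) :
    (∀ x : EuclideanSpace ℝ (Fin n),
        Integrable (fun ξ : EuclideanSpace ℝ (Fin n) =>
          Complex.exp (2 * Real.pi * Complex.I * ((inner ℝ x ξ : ℝ) : ℂ)) * g ξ)) ∧
      ContDiff ℝ (ρ : ℕ∞) (fun x : EuclideanSpace ℝ (Fin n) =>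
        ∫ ξ : EuclideanSpace ℝ (Fin n),
          Complex.exp (2 * Real.pi * Complex.I * ((inner ℝ x ξ : ℝ) : ℂ)) * g ξ) := by
  have hmom := hh_moment φ hφ hH n hn ρ g hg hfin
  have hgi : Integrable g := by
    have := hmom 0 (Nat.zero_le _)
    simp only [pow_zero, one_mul] at this
    exact (integrable_norm_iff hg.aestronglyMeasurable).1 this
  constructor
  · intro x
    refine hgi.bdd_mul (c := 1) (Continuous.aestronglyMeasurable (by fun_prop)) ?_
    refine Eventually.of_forall fun ξ => ?_
    rw [show (2 * Real.pi * Complex.I * ((inner ℝ x ξ : ℝ) : ℂ)) =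
      ((2 * Real.pi * inner ℝ x ξ : ℝ) : ℂ) * Complex.I by push_cast; ring,
      Complex.norm_exp_ofReal_mul_I]
  · have h := Real.contDiff_fourier (f := g) (N := (ρ : ℕ∞))
      (fun k hk => hmom k (by exact_mod_cast hk))
    have h2 := h.comp (contDiff_neg (𝕜 := ℝ) (F := EuclideanSpace ℝ (Fin n)))
    refine (congrArg (ContDiff ℝ (ρ : ℕ∞)) ?_).mpr h2
    funext x
    simp only [Function.comp, Real.fourier_eq', smul_eq_mul]
    congr 1
    funext ξ
    rw [inner_neg_right, real_inner_comm]
    congr 2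
    push_cast
    ring
end

section
/- (Sharpness of the Hörmander condition, Euclidean version of Proposition 2, necessity) Let φ be a function of the class 𝓜 with ∫₁^{+∞} dt/(t φ(t)²) = ∞ and let n ≥ 1. Then there exists a Lebesgue measurable function g : ℝⁿ → [0,∞) such that ∫_{ℝⁿ} ⟨ξ⟩^{n} φ(⟨ξ⟩)² g(ξ)² dξ < ∞ but ∫_{ℝⁿ} g(ξ) dξ = ∞; that is, the weighted space L²(⟨ξ⟩^{n} φ(⟨ξ⟩)² dξ) is not contained in L¹(ℝⁿ), so the embedding H^{n/2,φ}(ℝⁿ) ↪ C(ℝⁿ)∩L^∞(ℝⁿ) fails. -/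
open MeasureTheory Filter Topology

theorem exists_L2_not_L1 {α : Type*} [MeasurableSpace α] (ν : Measure α) [SigmaFinite ν]
    (hν : ν Set.univ = ⊤) :
    ∃ f : α → ℝ, Measurable f ∧ (∀ x, 0 ≤ f x) ∧ (∫⁻ x, ENNReal.ofReal (f x ^ 2) ∂ν) < ⊤ ∧
      (∫⁻ x, ENNReal.ofReal (f x) ∂ν) = ⊤ := by
  have h1 : ∀ j : ℕ, ∃ t, MeasurableSet t ∧ t ⊆ Set.univ ∧ ENNReal.ofReal (16 ^ j) < ν t ∧ ν t < ⊤ := by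
    intro j
    exact Measure.exists_subset_measure_lt_top MeasurableSet.univ (by rw [hν]; exact ENNReal.ofReal_lt_top)
  choose S hS _ hSl hSt using h1
  have hm : ∀ j, (16:ℝ) ^ j ≤ (ν (S j)).toReal := fun j =>
    (ENNReal.ofReal_le_iff_le_toReal (hSt j).ne).1 (hSl j).le
  have hmpos : ∀ j, 0 < (ν (S j)).toReal := fun j => lt_of_lt_of_le (by positivity) (hm j)
  set m : ℕ → ℝ := fun j => (ν (S j)).toReal with hmdef
  have hmν : ∀ j, ν (S j) = ENNReal.ofReal (m j) := fun j => (ENNReal.ofReal_toReal (hSt j).ne).symm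
  have hsum : ∑' j : ℕ, ENNReal.ofReal ((1/4:ℝ) ^ j) < ⊤ := by
    rw [← ENNReal.ofReal_tsum_of_nonneg (fun j => by positivity)
      (summable_geometric_of_lt_one (by norm_num) (by norm_num))]
    exact ENNReal.ofReal_lt_top
  let c : ℕ → ℝ := fun j => (1/4) ^ j / m j
  have hc0 : ∀ j, 0 ≤ c j := fun j => div_nonneg (by positivity) (hmpos j).le
  have hc1 : ∀ j, c j ≤ (1/4) ^ j := fun j =>
    div_le_self (by positivity) ((one_le_pow₀ (by norm_num)).trans (hm j))
  let G : α → ENNReal := fun x => ∑' j, (S j).indicator (fun _ => ENNReal.ofReal (c j)) x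
  have hGm : Measurable G := Measurable.tsum fun j => measurable_const.indicator (hS j)
  have hGt : ∀ x, G x < ⊤ := fun x => by
    refine lt_of_le_of_lt (ENNReal.tsum_le_tsum fun j => ?_) hsum
    exact (Set.indicator_le_self' (fun _ _ => zero_le) x).trans (ENNReal.ofReal_le_ofReal (hc1 j))
  refine ⟨fun x => Real.sqrt (G x).toReal, hGm.ennreal_toReal.sqrt, fun x => Real.sqrt_nonneg _, ?_, ?_⟩
  · have : ∀ x, ENNReal.ofReal (Real.sqrt (G x).toReal ^ 2) = G x := fun x => by
      rw [Real.sq_sqrt ENNReal.toReal_nonneg, ENNReal.ofReal_toReal (hGt x).ne]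
    simp_rw [this, G]
    rw [lintegral_tsum fun j => (measurable_const.indicator (hS j)).aemeasurable]
    convert hsum using 3 with j
    rw [lintegral_indicator_const (hS j), hmν, ← ENNReal.ofReal_mul (hc0 j)]
    congr 1
    exact div_mul_cancel₀ _ (hmpos j).ne'
  · have key : ∀ j : ℕ, ENNReal.ofReal (2 ^ j) ≤ ∫⁻ x, ENNReal.ofReal (Real.sqrt (G x).toReal) ∂ν := by
      intro j
      calc ENNReal.ofReal (2 ^ j) ≤ ENNReal.ofReal (Real.sqrt (c j)) * ν (S j) := by
            rw [hmν, ← ENNReal.ofReal_mul (Real.sqrt_nonneg _)]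
            apply ENNReal.ofReal_le_ofReal
            rw [← div_le_iff₀ (hmpos j)]
            apply Real.le_sqrt_of_sq_le
            change _ ≤ (1/4) ^ j / m j
            have h := hm j
            have hp := hmpos j
            change 16 ^ j ≤ m j at h
            change 0 < m j at hp
            rw [div_pow, div_le_div_iff₀ (by positivity) hp, one_div, inv_pow, inv_mul_eq_div,
              le_div_iff₀ (by positivity)]
            have e : ((2:ℝ)^j)^2 * 4^j = 16^j := by
              rw [← pow_mul, mul_comm j 2, pow_mul, ← mul_pow]; norm_num
            calc ((2:ℝ)^j)^2 * m j * 4^j = 16^j * m j := by rw [← e]; ring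
              _ ≤ m j * m j := by gcongr
              _ = m j ^ 2 := by ring
        _ = ∫⁻ x, (S j).indicator (fun _ => ENNReal.ofReal (Real.sqrt (c j))) x ∂ν := by
            rw [lintegral_indicator_const (hS j)]
        _ ≤ _ := by
            apply lintegral_mono
            intro x
            apply Set.indicator_le' (f := fun _ => ENNReal.ofReal (Real.sqrt (c j)))
              (g := fun x => ENNReal.ofReal (Real.sqrt (G x).toReal)) (s := S j) _ (fun _ _ => zero_le)
            intro x hx
            apply ENNReal.ofReal_le_ofReal
            apply Real.sqrt_le_sqrt
            rw [← ENNReal.ofReal_le_iff_le_toReal (hGt x).ne]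
            refine le_trans ?_ (ENNReal.le_tsum j)
            rw [Set.indicator_of_mem hx]
    by_contra hne
    obtain ⟨k, hk⟩ := pow_unbounded_of_one_lt
      (∫⁻ x, ENNReal.ofReal (Real.sqrt (G x).toReal) ∂ν).toReal (one_lt_two : (1:ℝ) < 2)
    have := (ENNReal.ofReal_le_iff_le_toReal hne).1 (key k)
    linarith

theorem lintegral_tail (φ : ℝ → ℝ) (hφ : SlowlyVaryingM φ)
    (hH : (∫⁻ t in Set.Ioi (1:ℝ), ENNReal.ofReal (1 / (t * φ t ^ 2))) = ⊤) :
    (∫⁻ t in Set.Ioi (2:ℝ), ENNReal.ofReal (1 / (t * φ t ^ 2))) = ⊤ := by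
  obtain ⟨_, hpos, hb, _⟩ := hφ
  obtain ⟨C, hC, hCb⟩ := hb 2 (by norm_num)
  have hfin : (∫⁻ t in Set.Ioc (1:ℝ) 2, ENNReal.ofReal (1 / (t * φ t ^ 2))) < ⊤ := by
    refine lt_of_le_of_lt (setLIntegral_mono (g := fun _ => ENNReal.ofReal (C^2)) measurable_const ?_) ?_
    · intro t ht
      apply ENNReal.ofReal_le_ofReal
      have h1 := (hCb t ⟨ht.1.le, ht.2⟩).2
      have hp := hpos t ht.1.le
      have h0 : 0 < 1 / φ t := by positivity
      have ht0 : 0 < t := by linarith [ht.1]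
      calc 1 / (t * φ t ^ 2) = (1 / t) * (1 / φ t)^2 := by field_simp
        _ ≤ 1 * C ^ 2 := by
          gcongr
          rw [div_le_one ht0]; exact ht.1.le
        _ = C^2 := one_mul _
    · simp
      exact ENNReal.mul_lt_top (by simp) (by simp)
  rw [← Set.Ioc_union_Ioi_eq_Ioi (by norm_num : (1:ℝ) ≤ 2),
    lintegral_union measurableSet_Ioi (Set.Ioc_disjoint_Ioi le_rfl)] at hH
  exact (ENNReal.add_eq_top.1 hH).resolve_left hfin.ne

theorem radial_top (φ : ℝ → ℝ) (hφ : SlowlyVaryingM φ)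
    (hH : (∫⁻ t in Set.Ioi (1:ℝ), ENNReal.ofReal (1 / (t * φ t ^ 2))) = ⊤)
    (n : ℕ) (hn : 1 ≤ n) :
    (∫⁻ ξ : EuclideanSpace ℝ (Fin n), ENNReal.ofReal
      (1 / (jbracket ξ ^ n * φ (jbracket ξ) ^ 2))) = ⊤ := by
  have htail := lintegral_tail φ hφ hH
  obtain ⟨hmeas, hpos, -, -⟩ := hφ
  let b : ℝ → ℝ := fun r => Real.sqrt (1 + r^2)
  have hbm : Measurable b := by fun_prop
  have hb1 : ∀ r, 1 ≤ b r := fun r => Real.one_le_sqrt.2 (by nlinarith)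
  let h : ℝ → ℝ := fun r => 1 / (b r ^ n * φ (b r) ^ 2)
  have hhm : Measurable h := by
    have := hmeas.comp hbm
    exact measurable_const.div ((hbm.pow_const n).mul (this.pow_const 2))
  have hh0 : ∀ r, 0 ≤ h r := fun r => by
    have := hb1 r
    have := hpos _ this
    positivity
  have : Nonempty (Fin n) := ⟨⟨0, hn⟩⟩
  by_contra hne
  have hint : Integrable (fun ξ : EuclideanSpace ℝ (Fin n) => h ‖ξ‖) volume := by
    refine ⟨(hhm.comp measurable_norm).aestronglyMeasurable, ?_⟩
    rw [hasFiniteIntegral_iff_ofReal (Eventually.of_forall fun ξ => hh0 _)]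
    exact lt_top_iff_ne_top.2 hne
  rw [integrable_fun_norm_addHaar volume (f := h)] at hint
  simp only [finrank_euclideanSpace, Fintype.card_fin, smul_eq_mul] at hint
  have hint1 : IntegrableOn (fun y : ℝ => 2 ^ (n-1) * (y ^ (n-1) * h y)) (Set.Ioi 1) :=
    (hint.mono_set (Set.Ioi_subset_Ioi zero_le_one)).const_mul _
  have hfin : (∫⁻ y in Set.Ioi (1:ℝ), ENNReal.ofReal (2 ^ (n-1) * (y ^ (n-1) * h y))) < ⊤ := by
    have := hint1.2
    rwa [hasFiniteIntegral_iff_ofReal] at this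
    filter_upwards [self_mem_ae_restrict measurableSet_Ioi] with y hy
    have : (0:ℝ) < y := lt_trans one_pos hy
    have := hh0 y
    change 0 ≤ 2 ^ (n-1) * (y ^ (n-1) * h y)
    positivity
  have hderiv : ∀ r ∈ Set.Ioi (1:ℝ), HasDerivWithinAt b (r / b r) (Set.Ioi 1) r := by
    intro r hr
    have h1 : HasDerivAt (fun r : ℝ => 1 + r^2) (2 * r) r := by
      simpa using (hasDerivAt_pow 2 r).const_add 1
    have h2 := h1.sqrt (by positivity)
    have e : r / b r = 2 * r / (2 * Real.sqrt (1 + r^2)) := by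
      change r / Real.sqrt (1 + r^2) = _
      field_simp
    rw [e]
    exact h2.hasDerivWithinAt
  have hbsq : ∀ r, b r ^ 2 = 1 + r^2 := fun r => Real.sq_sqrt (by positivity)
  have hinj : Set.InjOn b (Set.Ioi 1) := by
    intro x hx y hy hxy
    have h1 := hbsq x
    have h2 := hbsq y
    rw [hxy] at h1
    have : x^2 = y^2 := by linarith
    have hx' : (1:ℝ) < x := hx
    have hy' : (1:ℝ) < y := hy
    exact (pow_left_inj₀ (by linarith) (by linarith) two_ne_zero).1 this
  have hcv := lintegral_image_eq_lintegral_abs_deriv_mul measurableSet_Ioi hderiv hinj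
    (fun t => ENNReal.ofReal (1 / (t * φ t ^ 2)))
  have hsub : Set.Ioi (2:ℝ) ⊆ b '' Set.Ioi 1 := by
    intro t ht
    have ht' : (2:ℝ) < t := ht
    refine ⟨Real.sqrt (t^2 - 1), ?_, ?_⟩
    · rw [Set.mem_Ioi]
      apply Real.lt_sqrt_of_sq_lt
      nlinarith
    · change Real.sqrt (1 + Real.sqrt (t^2-1) ^ 2) = t
      rw [Real.sq_sqrt (by nlinarith)]
      rw [show 1 + (t^2-1) = t^2 by ring]
      exact Real.sqrt_sq (by linarith)
  have hle : (∫⁻ t in Set.Ioi (2:ℝ), ENNReal.ofReal (1 / (t * φ t ^ 2))) ≤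
      ∫⁻ y in Set.Ioi (1:ℝ), ENNReal.ofReal (2 ^ (n-1) * (y ^ (n-1) * h y)) := by
    refine (lintegral_mono_set hsub).trans ?_
    rw [hcv]
    refine setLIntegral_mono' measurableSet_Ioi fun r hr => ?_
    have hr' : (1:ℝ) < r := hr
    have hb := hb1 r
    have hp := hpos _ hb
    have hb0 : 0 < b r := by linarith
    rw [← ENNReal.ofReal_mul (abs_nonneg _)]
    apply ENNReal.ofReal_le_ofReal
    have hrb : r ≤ b r := Real.le_sqrt_of_sq_le (by linarith)
    have hb2 : b r ≤ 2 * r := by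
      apply Real.sqrt_le_iff.2; constructor <;> nlinarith
    rw [abs_of_nonneg (by positivity)]
    obtain ⟨k, rfl⟩ : ∃ k, n = k + 1 := ⟨n - 1, by omega⟩
    simp only [Nat.add_sub_cancel]
    calc r / b r * (1 / (b r * φ (b r) ^ 2)) ≤ 1 * (1 / (b r * φ (b r) ^ 2)) := by
          gcongr
          exact (div_le_one hb0).2 hrb
      _ = b r ^ k * h r := by
          simp only [h]; field_simp; ring
      _ ≤ (2 * r) ^ k * h r := by
          have := hh0 r
          gcongr
      _ = _ := by rw [mul_pow]; ring
  rw [htail] at hle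
  exact absurd hfin (not_lt.2 hle)

/-- Sharpness of the Hörmander condition (necessity): if `∫₁^∞ dt/(t φ(t)²) = ∞` then the
weighted space `L²(⟨ξ⟩ⁿ φ(⟨ξ⟩)² dξ)` is not contained in `L¹(ℝⁿ)`. -/
theorem exists_not_integrable_of_hormander_condition_fails
    (φ : ℝ → ℝ) (hφ : SlowlyVaryingM φ)
    (hH : (∫⁻ t in Set.Ioi (1:ℝ), ENNReal.ofReal (1 / (t * φ t ^ 2))) = ⊤)
    (n : ℕ) (hn : 1 ≤ n) :
    ∃ g : EuclideanSpace ℝ (Fin n) → ℝ, Measurable g ∧ (∀ ξ, 0 ≤ g ξ) ∧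
      (∫⁻ ξ, ENNReal.ofReal
          (jbracket ξ ^ (n : ℝ) * φ (jbracket ξ) ^ 2 * g ξ ^ 2)) < ⊤ ∧
      (∫⁻ ξ, ENNReal.ofReal (g ξ)) = ⊤ := by
  have htop := radial_top φ hφ hH n hn
  obtain ⟨hmeas, hpos, -, -⟩ := hφ
  have hjm : Measurable (jbracket : EuclideanSpace ℝ (Fin n) → ℝ) := by
    unfold jbracket; fun_prop
  have hj1 : ∀ ξ : EuclideanSpace ℝ (Fin n), 1 ≤ jbracket ξ := fun ξ =>
    Real.one_le_sqrt.2 (by nlinarith [norm_nonneg ξ])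
  let w : EuclideanSpace ℝ (Fin n) → ℝ := fun ξ => jbracket ξ ^ n * φ (jbracket ξ) ^ 2
  have hw0 : ∀ ξ, 0 < w ξ := fun ξ => by
    have := hj1 ξ
    have := hpos _ this
    positivity
  have hwm : Measurable w := (hjm.pow_const n).mul ((hmeas.comp hjm).pow_const 2)
  have hvm : Measurable (fun ξ => 1 / w ξ) := measurable_const.div hwm
  let ν : Measure (EuclideanSpace ℝ (Fin n)) :=
    volume.withDensity (fun ξ => ENNReal.ofReal (1 / w ξ))
  have hν : ν Set.univ = ⊤ := by
    rw [withDensity_apply _ MeasurableSet.univ, Measure.restrict_univ]; exact htop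
  obtain ⟨f, hfm, hf0, hf2, hf1⟩ := exists_L2_not_L1 ν hν
  rw [lintegral_withDensity_eq_lintegral_mul _ hvm.ennreal_ofReal
    (hfm.pow_const 2).ennreal_ofReal] at hf2
  rw [lintegral_withDensity_eq_lintegral_mul _ hvm.ennreal_ofReal hfm.ennreal_ofReal] at hf1
  refine ⟨fun ξ => 1 / w ξ * f ξ, hvm.mul hfm, fun ξ => ?_, ?_, ?_⟩
  · have := hw0 ξ
    have := hf0 ξ
    positivity
  · refine lt_of_eq_of_lt (lintegral_congr fun ξ => ?_) hf2
    have := hw0 ξ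
    rw [Pi.mul_apply, ← ENNReal.ofReal_mul (by positivity), Real.rpow_natCast]
    congr 1
    change w ξ * (1 / w ξ * f ξ) ^ 2 = _
    field_simp
  · refine (lintegral_congr fun ξ => ?_).trans hf1
    have := hw0 ξ
    rw [Pi.mul_apply, ← ENNReal.ofReal_mul (by positivity)]
end
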